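/- Let A be a reduced Noetherian commutative ring which is equidimensional, satisfies Serre's condition (S_2), and whose integral closure Ā in Q(A) is a finite A-module. Let J be a test ideal for A, and let J′ ⊆ A be a radical ideal such that every associated prime of A/J′ is an associated prime of A/J. Then n(A, J′) ≤ n(A, J). -/

import Mathlib

set_option synthInstance.maxHeartbeats 1000000
set_option maxHeartbeats 1000000

open scoped nonZeroDivisors

noncomputable section

/-- Given an intermediate ring `B` with `A ⊆ B ⊆ Q(A)` and an ideal `I` of `B`, the
endomorphism ring `End_B(I) = {x ∈ Q(A) : x·I ⊆ I}`, as a subalgebra of `Q(A)`. -/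
def endStep (A : Type*) [CommRing A] (B : Subalgebra A (FractionRing A))
    (I : Ideal B) : Subalgebra A (FractionRing A) where
  carrier := {x : FractionRing A | ∀ j ∈ I,
    x * (j : FractionRing A) ∈ (fun b : B => (b : FractionRing A)) '' I}
  mul_mem' := by
    intro x y hx hy j hj
    obtain ⟨j', hj', heq⟩ := hy j hj
    rw [mul_assoc, ← heq]
    exact hx j' hj'
  one_mem' := by
    intro j hj
    exact ⟨j, hj, (one_mul _).symm⟩
  add_mem' := by
    intro x y hx hy j hj
    obtain ⟨j1, hj1, h1⟩ := hx j hj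
    obtain ⟨j2, hj2, h2⟩ := hy j hj
    refine ⟨j1 + j2, I.add_mem hj1 hj2, ?_⟩
    push_cast
    rw [add_mul, ← h1, ← h2]
  zero_mem' := by
    intro j hj
    exact ⟨0, I.zero_mem, by push_cast; rw [zero_mul]⟩
  algebraMap_mem' := by
    intro a j hj
    refine ⟨algebraMap A B a * j, I.mul_mem_left _ hj, ?_⟩
    push_cast
    rfl

/-- The Grauert–Remmert normalization chain inside `Q(A)`:
`A_0 = A` (the image of `A` in `Q(A)`), and
`A_{i+1} = End_{A_i}(√(J·A_i))`. -/
def chainRing (A : Type*) [CommRing A] (J : Ideal A) :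
    ℕ → Subalgebra A (FractionRing A)
  | 0 => ⊥
  | n + 1 =>
      endStep A (chainRing A J n)
        ((J.map (algebraMap A (chainRing A J n))).radical)

/-- The number of steps of the Grauert–Remmert-type normalization algorithm:
the least `n` with `A_n = A_{n+1}`. -/
def nSteps (A : Type*) [CommRing A] (J : Ideal A) : ℕ :=
  sInf {n | chainRing A J n = chainRing A J (n + 1)}

/-- The conductor of `A` in its integral closure inside `Q(A)`. -/
def conductorIdeal (A : Type*) [CommRing A] : Ideal A where
  carrier := {a : A | ∀ x ∈ integralClosure A (FractionRing A),
      algebraMap A (FractionRing A) a * x ∈ (algebraMap A (FractionRing A)).range}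
  add_mem' := by
    intro a b ha hb x hx
    rw [map_add, add_mul]
    exact add_mem (ha x hx) (hb x hx)
  zero_mem' := by
    intro x hx
    rw [map_zero, zero_mul]
    exact zero_mem _
  smul_mem' := by
    intro c a ha x hx
    obtain ⟨y, hy⟩ := ha x hx
    refine ⟨c * y, ?_⟩
    rw [map_mul, hy, smul_eq_mul, map_mul, mul_assoc]

/-- A test ideal for `A`. -/
def IsTestIdeal (A : Type*) [CommRing A] (J : Ideal A) : Prop :=
  (∃ g ∈ J, g ∈ A⁰) ∧ J.IsRadical ∧
    PrimeSpectrum.zeroLocus (conductorIdeal A : Set A) ⊆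
      PrimeSpectrum.zeroLocus (J : Set A)

/-- Serre's condition `(S₂)`. -/
def SerreS2 (A : Type*) [CommRing A] : Prop :=
  ∀ P : PrimeSpectrum A, ∀ n : ℕ, n ≤ 2 →
    (n : WithBot ℕ∞) ≤ ringKrullDim (Localization.AtPrime P.asIdeal) →
    ∃ rs : List (Localization.AtPrime P.asIdeal), rs.length = n ∧
      (∀ r ∈ rs, r ∈ IsLocalRing.maximalIdeal (Localization.AtPrime P.asIdeal)) ∧
      RingTheory.Sequence.IsRegular (Localization.AtPrime P.asIdeal) rs

/-- `A` is equidimensional: all minimal primes have quotients of the same Krull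
dimension and all maximal ideals have the same height. -/
def Equidimensional (A : Type*) [CommRing A] : Prop :=
  (∀ P Q : Ideal A, P ∈ minimalPrimes A → Q ∈ minimalPrimes A →
      ringKrullDim (A ⧸ P) = ringKrullDim (A ⧸ Q)) ∧
    (∀ M N : PrimeSpectrum A, M.asIdeal.IsMaximal → N.asIdeal.IsMaximal →
      ringKrullDim (Localization.AtPrime M.asIdeal)
        = ringKrullDim (Localization.AtPrime N.asIdeal))

/-! The hypothesis on associated primes gives `J ⊆ J'`. By (S₂), `A` is the intersection of its
localizations at the primes of height at most one, and each ring `A_n'` of the chain of `J'`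
inherits this property: if `x` lies in `End(I)` at all such primes, then `x ^ k * I ⊆ A_n'` for
every `k`, so `x` is integral over `A_n'`, and since `I` is radical an integral equation forces
`x * I ⊆ I`. It thus suffices to show, at every prime `P` of height at most one, that the chain of
`J'` stops at the step at which the chain of `J` does. If `J' ⊈ P`, the chain of `J'` is constant
at `P`. Otherwise `P` is minimal over both `J` and `J'`, as these contain non-zerodivisors, so
their radicals agree at `P`, and hence so do the two chains. -/

section Saturation

variable {R M : Type*} [CommSemiring R] [AddCommMonoid M] [Module R M]

/-- The `S`-saturation of a submodule `N ⊆ M`, i.e. the preimage in `M` of the localized submodule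
`S⁻¹N ⊆ S⁻¹M`. For `S` the complement of a prime, inclusions of saturations compare submodules
locally at that prime without leaving `M`. -/
def saturation (S : Submonoid R) (N : Submodule R M) : Submodule R M where
  carrier := {x | ∃ s ∈ S, s • x ∈ N}
  zero_mem' := ⟨1, S.one_mem, by rw [smul_zero]; exact N.zero_mem⟩
  add_mem' := by
    rintro x y ⟨s, hs, hsx⟩ ⟨t, ht, hty⟩
    refine ⟨t * s, S.mul_mem ht hs, ?_⟩
    rw [smul_add, mul_smul, mul_comm, mul_smul]
    exact N.add_mem (N.smul_mem t hsx) (N.smul_mem s hty)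
  smul_mem' := by
    rintro a x ⟨s, hs, hsx⟩
    exact ⟨s, hs, by rw [smul_comm]; exact N.smul_mem a hsx⟩

variable {S : Submonoid R} {N N' : Submodule R M} {x : M}

lemma le_saturation : N ≤ saturation S N :=
  fun x hx => ⟨1, S.one_mem, by rwa [one_smul]⟩

lemma mem_saturation_of_smul_mem {s : R} (hs : s ∈ S) (hx : s • x ∈ saturation S N) :
    x ∈ saturation S N := by
  obtain ⟨t, ht, htx⟩ := hx
  exact ⟨t * s, S.mul_mem ht hs, by rwa [mul_smul]⟩

lemma saturation_le_saturation (h : N ≤ saturation S N') : saturation S N ≤ saturation S N' := by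
  rintro x ⟨s, hs, hsx⟩
  exact mem_saturation_of_smul_mem hs (h hsx)

lemma exists_forall_smul_mem_of_fg (hN : N.FG) (h : N ≤ saturation S N') :
    ∃ s ∈ S, ∀ x ∈ N, s • x ∈ N' := by
  induction N, hN using Submodule.fg_induction with
  | singleton x =>
    obtain ⟨s, hs, hsx⟩ := h (Submodule.mem_span_singleton_self x)
    refine ⟨s, hs, fun y hy => ?_⟩
    obtain ⟨a, rfl⟩ := Submodule.mem_span_singleton.1 hy
    rw [smul_comm]
    exact N'.smul_mem a hsx
  | sup N₁ N₂ _ _ ih₁ ih₂ =>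
    obtain ⟨s, hs, hsN⟩ := ih₁ (le_sup_left.trans h)
    obtain ⟨t, ht, htN⟩ := ih₂ (le_sup_right.trans h)
    refine ⟨t * s, S.mul_mem ht hs, fun y hy => ?_⟩
    obtain ⟨y₁, hy₁, y₂, hy₂, rfl⟩ := Submodule.mem_sup.1 hy
    rw [smul_add, mul_smul, mul_comm, mul_smul]
    exact N'.add_mem (N'.smul_mem t (hsN _ hy₁)) (N'.smul_mem s (htN _ hy₂))

/-- `N` is the intersection of its saturations at the primes in `X`; for `X` the primes of height
at most one this is the property through which condition (S₂) enters. -/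
def IsDeterminedOn (X : Set (PrimeSpectrum R)) (N : Submodule R M) : Prop :=
  ∀ x, (∀ p ∈ X, x ∈ saturation p.asIdeal.primeCompl N) → x ∈ N

end Saturation

section SaturationAlgebra

variable {R K : Type*} [CommSemiring R] [CommSemiring K] [Algebra R K] {S : Submonoid R}
  {M M' N N' : Submodule R K} {x y : K}

lemma pow_mem_saturation {B : Subalgebra R K} (hx : x ∈ saturation S (Subalgebra.toSubmodule B))
    (n : ℕ) : x ^ n ∈ saturation S (Subalgebra.toSubmodule B) := by
  obtain ⟨s, hs, hsx⟩ := hx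
  exact ⟨s ^ n, S.pow_mem hs n, by rw [← smul_pow]; exact B.pow_mem hsx n⟩

lemma mul_mem_saturation_of_mem_div (hx : x ∈ M / N) (hy : y ∈ saturation S N) :
    x * y ∈ saturation S M := by
  obtain ⟨s, hs, hsy⟩ := hy
  exact ⟨s, hs, by rw [← mul_smul_comm]; exact hx _ hsy⟩

lemma mul_mem_saturation_of_mem_saturation_div (hx : x ∈ saturation S (M / N)) (hy : y ∈ N) :
    x * y ∈ saturation S M := by
  obtain ⟨s, hs, hsx⟩ := hx
  exact ⟨s, hs, by rw [← smul_mul_assoc]; exact hsx y hy⟩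

lemma mem_saturation_div_of_fg (hN : N.FG) (h : ∀ y ∈ N, x * y ∈ saturation S M) :
    x ∈ saturation S (M / N) := by
  have hxN : N.map (LinearMap.mulLeft R x) ≤ saturation S M := Submodule.map_le_iff_le_comap.2 h
  obtain ⟨s, hs, hsM⟩ := exists_forall_smul_mem_of_fg (hN.map _) hxN
  refine ⟨s, hs, Submodule.mem_div_iff_forall_mul_mem.2 fun y hy => ?_⟩
  rw [smul_mul_assoc]
  exact hsM _ (Submodule.mem_map_of_mem hy)

lemma div_le_saturation_div (hN' : N'.FG) (hM : M ≤ saturation S M') (hN : N' ≤ saturation S N) :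
    M / N ≤ saturation S (M' / N') := fun _ hx =>
  mem_saturation_div_of_fg hN' fun _ hy =>
    saturation_le_saturation hM (mul_mem_saturation_of_mem_div hx (hN hy))

lemma IsDeterminedOn.div {X : Set (PrimeSpectrum R)} (hM : IsDeterminedOn X M) :
    IsDeterminedOn X (M / N) := fun _ hx =>
  Submodule.mem_div_iff_forall_mul_mem.2 fun _ hy =>
    hM _ fun p hp => mul_mem_saturation_of_mem_saturation_div (hx p hp) hy

end SaturationAlgebra

section IdealsOfSubalgebras

variable {R K : Type*} [CommRing R] [CommRing K] [Algebra R K] {B C : Subalgebra R K}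

/-- An ideal of a subalgebra `B ⊆ K`, regarded as an `R`-submodule of `K`; in this form ideals of
different subalgebras can be compared and divided. -/
def idealToSubmodule (I : Ideal B) : Submodule R K :=
  (I.restrictScalars R).map B.val.toLinearMap

lemma coe_mem_idealToSubmodule {I : Ideal B} {b : B} :
    (b : K) ∈ idealToSubmodule I ↔ b ∈ I :=
  Subtype.val_injective.mem_set_image

lemma idealToSubmodule_le (I : Ideal B) : idealToSubmodule I ≤ Subalgebra.toSubmodule B := by
  rintro _ ⟨b, -, rfl⟩
  exact b.2

lemma idealToSubmodule_fg [IsNoetherian R B] (I : Ideal B) : (idealToSubmodule I).FG :=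
  (IsNoetherian.noetherian (I.restrictScalars R)).map _

/-- The submodule `√(J·B)` of `K`. -/
def radicalExtension (B : Subalgebra R K) (J : Ideal R) : Submodule R K :=
  idealToSubmodule (J.map (algebraMap R B)).radical

lemma smul_mem_of_smul_pow_mem {I : Ideal B} (hI : I.IsRadical) {s : R} {b : B} {n : ℕ}
    (h : s • b ^ n ∈ I) : s • b ∈ I := by
  refine hI ⟨n + 1, ?_⟩
  have hpow : (s • b) ^ (n + 1) = (s ^ n • b) * (s • b ^ n) := by
    rw [smul_pow, smul_mul_smul_comm, pow_succ, pow_succ']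
  rw [hpow]
  exact I.mul_mem_left _ h

variable {S : Submonoid R} {J L : Ideal R}

lemma idealToSubmodule_map_le_saturation
    (hBC : Subalgebra.toSubmodule B ≤ saturation S (Subalgebra.toSubmodule C))
    (hJL : J ≤ saturation S L.radical) :
    idealToSubmodule (J.map (algebraMap R B)) ≤ saturation S (radicalExtension C L) := by
  rw [idealToSubmodule, ← Ideal.smul_top_eq_map, Submodule.map_le_iff_le_comap, Submodule.smul_le]
  intro j hj b _
  obtain ⟨s, hs, hsj⟩ := hJL hj
  obtain ⟨t, ht, htb⟩ := hBC b.2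
  have hmem : algebraMap R C (s • j) ∈ (L.map (algebraMap R C)).radical :=
    Ideal.map_radical_le _ (Ideal.mem_map_of_mem _ hsj)
  have hcoe : (s • j) • t • (b : K) = (s * t) • j • (b : K) := by
    rw [smul_assoc, smul_comm j, mul_smul]
  refine ⟨s * t, S.mul_mem hs ht, algebraMap R C (s • j) * ⟨_, htb⟩,
    Ideal.mul_mem_right _ _ hmem, ?_⟩
  exact (Algebra.smul_def _ _).symm.trans hcoe

lemma radicalExtension_le_saturation
    (hBC : Subalgebra.toSubmodule B ≤ saturation S (Subalgebra.toSubmodule C))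
    (hJL : J ≤ saturation S L.radical) :
    radicalExtension B J ≤ saturation S (radicalExtension C L) := by
  rintro _ ⟨b, ⟨n, hbn⟩, rfl⟩
  obtain ⟨s, hs, hsb⟩ :=
    idealToSubmodule_map_le_saturation hBC hJL (coe_mem_idealToSubmodule.2 hbn)
  obtain ⟨t, ht, htb⟩ := hBC b.2
  let c : C := ⟨t • b, htb⟩
  have hc : s • c ^ n ∈ (L.map (algebraMap R C)).radical := by
    have hcoe : ((s • c ^ n : C) : K) = t ^ n • s • (b : K) ^ n := by
      simp [c, smul_pow, smul_comm s]
    rw [← coe_mem_idealToSubmodule, hcoe]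
    exact Submodule.smul_mem _ _ hsb
  have hsc : s • c ∈ (L.map (algebraMap R C)).radical :=
    smul_mem_of_smul_pow_mem (Ideal.radical_isRadical _) hc
  exact ⟨s * t, S.mul_mem hs ht, s • c, hsc, (mul_smul s t (b : K)).symm⟩

-- For `j ∈ I`, an integral equation of `x` of degree `n`, multiplied by `j ^ n`, has all its lower
-- terms in `I`, so `(x * j) ^ n ∈ I`.
lemma mem_div_self_of_isIntegral {I : Ideal B} (hI : I.IsRadical) {x : K} (hx : IsIntegral B x)
    (h : x ∈ Subalgebra.toSubmodule B / idealToSubmodule I) :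
    x ∈ idealToSubmodule I / idealToSubmodule I := by
  obtain ⟨p, hp, hpx⟩ := hx
  rintro _ ⟨j, hj, rfl⟩
  let y : B := ⟨x * j, h _ ⟨j, hj, rfl⟩⟩
  have hroot : (p.scaleRoots j).IsRoot y := by
    apply Subtype.val_injective
    have hzero := Polynomial.scaleRoots_eval₂_eq_zero (s := j) _ hpx
    rwa [show algebraMap B K j * x = algebraMap B K y from mul_comm _ _,
      Polynomial.eval₂_at_apply] at hzero
  have hpow : y ^ (p.scaleRoots j).natDegree ∈ I :=
    (Polynomial.scaleRoots.isWeaklyEisensteinAt p hj).pow_natDegree_le_of_root_of_monic_mem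
      hroot ((Polynomial.monic_scaleRoots_iff j).2 hp) _ le_rfl
  exact ⟨y, hI ⟨_, hpow⟩, rfl⟩

end IdealsOfSubalgebras

section Noetherian

lemma isNoetherian_of_forall_smul_mem {R M : Type*} [CommRing R] [AddCommGroup M] [Module R M]
    {N N' : Submodule R M} [IsNoetherian R N'] {g : R} (hg : IsSMulRegular M g)
    (h : ∀ x ∈ N, g • x ∈ N') : IsNoetherian R N :=
  isNoetherian_of_injective ((LinearMap.lsmul R M g).restrict h) fun _ _ hxy =>
    Subtype.ext (hg (congrArg Subtype.val hxy))

lemma isIntegral_of_forall_smul_pow_mem {R K : Type*} [CommRing R] [CommRing K] [Algebra R K]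
    {N : Submodule R K} [IsNoetherian R N] {g : R} (hg : IsSMulRegular K g) {x : K}
    (h : ∀ n : ℕ, g • x ^ n ∈ N) : IsIntegral R x := by
  have hle : Subalgebra.toSubmodule (Algebra.adjoin R {x}) ≤ N.comap (LinearMap.lsmul R K g) := by
    rw [Algebra.adjoin_eq_span, ← Submonoid.powers_eq_closure, Submodule.span_le]
    rintro _ ⟨n, rfl⟩
    exact h n
  have := isNoetherian_of_forall_smul_mem hg hle
  exact .of_mem_of_fg _ (Module.Finite.iff_fg.1 inferInstance) x
    (Algebra.self_mem_adjoin_singleton R x)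

lemma isSMulRegular_fractionRing {R : Type*} [CommRing R] {g : R} (hg : g ∈ R⁰) :
    IsSMulRegular (FractionRing R) g := by
  have hunit := IsLocalization.map_units (FractionRing R) (⟨g, hg⟩ : R⁰)
  intro x y hxy
  simp only [Algebra.smul_def] at hxy
  exact hunit.mul_left_cancel hxy

end Noetherian

section EndStep

variable {A : Type*} [CommRing A] {B C : Subalgebra A (FractionRing A)} {I : Ideal B}

lemma toSubmodule_endStep (B : Subalgebra A (FractionRing A)) (I : Ideal B) :
    Subalgebra.toSubmodule (endStep A B I) = idealToSubmodule I / idealToSubmodule I := by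
  ext x
  exact ⟨fun hx => by rintro _ ⟨j, hj, rfl⟩; exact hx j hj, fun hx j hj => hx _ ⟨j, hj, rfl⟩⟩

lemma le_endStep (B : Subalgebra A (FractionRing A)) (I : Ideal B) : B ≤ endStep A B I :=
  fun x hx j hj => ⟨⟨x, hx⟩ * j, I.mul_mem_left _ hj, rfl⟩

lemma smul_mem_of_mem_endStep {a : A} (ha : algebraMap A B a ∈ I) {x : FractionRing A}
    (hx : x ∈ endStep A B I) : a • x ∈ B := by
  obtain ⟨b, -, hb⟩ := hx _ ha
  rw [Algebra.smul_def, mul_comm]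
  exact hb ▸ b.2

lemma isNoetherian_endStep [IsNoetherian A B] {g : A} (hg : g ∈ A⁰) (hgI : algebraMap A B g ∈ I) :
    IsNoetherian A (endStep A B I) :=
  isNoetherian_of_forall_smul_mem (N := Subalgebra.toSubmodule (endStep A B I))
    (N' := Subalgebra.toSubmodule B) (isSMulRegular_fractionRing hg)
    fun _ hx => smul_mem_of_mem_endStep hgI hx

lemma IsDeterminedOn.endStep [IsNoetherian A B] {X : Set (PrimeSpectrum A)}
    (hB : IsDeterminedOn X (Subalgebra.toSubmodule B)) (hI : I.IsRadical) {g : A} (hg : g ∈ A⁰)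
    (hgI : algebraMap A B g ∈ I) :
    IsDeterminedOn X (Subalgebra.toSubmodule (endStep A B I)) := by
  intro x hx
  have hpow (n : ℕ) : x ^ n ∈ Subalgebra.toSubmodule B / idealToSubmodule I := by
    refine hB.div _ fun p hp => saturation_le_saturation ?_ (pow_mem_saturation (hx p hp) n)
    rw [toSubmodule_endStep]
    exact fun y hy => le_saturation fun z hz => idealToSubmodule_le I (hy z hz)
  have hint : IsIntegral A x := by
    have : IsNoetherian A (Subalgebra.toSubmodule B) := ‹IsNoetherian A B›
    refine isIntegral_of_forall_smul_pow_mem (N := Subalgebra.toSubmodule B)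
      (isSMulRegular_fractionRing hg) fun n => ?_
    rw [Algebra.smul_def, mul_comm]
    exact hpow n _ ⟨_, hgI, rfl⟩
  rw [toSubmodule_endStep]
  exact mem_div_self_of_isIntegral hI hint.tower_top (by simpa only [pow_one] using hpow 1)

end EndStep

section Chain

variable {A : Type*} [CommRing A] {J L : Ideal A}

lemma chainRing_mono (J : Ideal A) : Monotone (chainRing A J) :=
  monotone_nat_of_le_succ fun _ => le_endStep _ _

lemma toSubmodule_chainRing_succ (J : Ideal A) (n : ℕ) :
    Subalgebra.toSubmodule (chainRing A J (n + 1)) =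
      radicalExtension (chainRing A J n) J / radicalExtension (chainRing A J n) J :=
  toSubmodule_endStep _ _

lemma algebraMap_mem_radical_map {R S : Type*} [CommRing R] [CommRing S] [Algebra R S] {I : Ideal R}
    {a : R} (ha : a ∈ I) : algebraMap R S a ∈ (I.map (algebraMap R S)).radical :=
  Ideal.le_radical (Ideal.mem_map_of_mem _ ha)

lemma smul_mem_chainRing {a : A} (ha : a ∈ J) {n : ℕ} {x : FractionRing A}
    (hx : x ∈ chainRing A J (n + 1)) : a • x ∈ chainRing A J n :=
  smul_mem_of_mem_endStep (algebraMap_mem_radical_map ha) hx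

variable [IsNoetherianRing A]

lemma isNoetherian_chainRing (hJ : ∃ g ∈ J, g ∈ A⁰) (n : ℕ) : IsNoetherian A (chainRing A J n) := by
  obtain ⟨g, hgJ, hg⟩ := hJ
  induction n with
  | zero => exact inferInstanceAs (IsNoetherian A (⊥ : Subalgebra A (FractionRing A)))
  | succ n ih => exact isNoetherian_endStep hg (algebraMap_mem_radical_map hgJ)

lemma chainRing_le_integralClosure (hJ : ∃ g ∈ J, g ∈ A⁰) (n : ℕ) :
    chainRing A J n ≤ integralClosure A (FractionRing A) := by
  have := isNoetherian_chainRing hJ n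
  exact (le_integralClosure_iff_isIntegral).2 inferInstance

lemma exists_chainRing_eq_chainRing_succ [Module.Finite A (integralClosure A (FractionRing A))]
    (hJ : ∃ g ∈ J, g ∈ A⁰) : ∃ n, chainRing A J n = chainRing A J (n + 1) := by
  let Ā := integralClosure A (FractionRing A)
  let chain : ℕ →o Submodule A Ā :=
    { toFun n := (Subalgebra.toSubmodule (chainRing A J n)).comap Ā.val.toLinearMap
      monotone' _ _ h := Submodule.comap_mono (chainRing_mono J h) }
  obtain ⟨n, hn⟩ := monotone_stabilizes_iff_noetherian.2 inferInstance chain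
  refine ⟨n, le_antisymm (chainRing_mono J n.le_succ) fun x hx => ?_⟩
  have hmem : (⟨x, chainRing_le_integralClosure hJ _ hx⟩ : Ā) ∈ chain (n + 1) := hx
  rwa [← hn (n + 1) n.le_succ] at hmem

lemma isDeterminedOn_chainRing {X : Set (PrimeSpectrum A)}
    (hA : IsDeterminedOn X (Subalgebra.toSubmodule (⊥ : Subalgebra A (FractionRing A))))
    (hJ : ∃ g ∈ J, g ∈ A⁰) (n : ℕ) :
    IsDeterminedOn X (Subalgebra.toSubmodule (chainRing A J n)) := by
  induction n with
  | zero => exact hA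
  | succ n ih =>
    have := isNoetherian_chainRing hJ n
    obtain ⟨g, hgJ, hg⟩ := hJ
    exact ih.endStep (Ideal.radical_isRadical _) hg (algebraMap_mem_radical_map hgJ)

lemma chainRing_le_saturation {S : Submonoid A} (hJ : ∃ g ∈ J, g ∈ A⁰) (hL : ∃ g ∈ L, g ∈ A⁰)
    (hJL : J ≤ saturation S L.radical) (hLJ : L ≤ saturation S J.radical) (n : ℕ) :
    Subalgebra.toSubmodule (chainRing A J n) ≤
      saturation S (Subalgebra.toSubmodule (chainRing A L n)) := by
  induction n generalizing J L with
  | zero => exact le_saturation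
  | succ n ih =>
    have := isNoetherian_chainRing hL n
    rw [toSubmodule_chainRing_succ, toSubmodule_chainRing_succ]
    exact div_le_saturation_div (idealToSubmodule_fg _)
      (radicalExtension_le_saturation (ih hJ hL hJL hLJ) hJL)
      (radicalExtension_le_saturation (ih hL hJ hLJ hJL) hLJ)

end Chain

section SerreCondition

lemma dvd_of_isWeaklyRegular_pair {R : Type*} [CommRing R] {r s b c : R}
    (hreg : RingTheory.Sequence.IsWeaklyRegular R [r, s]) (hc : c ∈ R⁰) (hr : c ∣ r * b)
    (hs : c ∣ s * b) : c ∣ b := by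
  rw [RingTheory.Sequence.isWeaklyRegular_cons_iff,
    RingTheory.Sequence.isWeaklyRegular_singleton_iff] at hreg
  obtain ⟨hr_reg, hs_reg⟩ := hreg
  obtain ⟨u, hu⟩ := hr
  obtain ⟨v, hv⟩ := hs
  have huv : s * u = r * v :=
    (mul_cancel_left_mem_nonZeroDivisors hc).1 (by linear_combination r * hv - s * hu)
  have hu_zero : (Submodule.Quotient.mk u : QuotSMulTop r R) = 0 := by
    apply hs_reg.right_eq_zero_of_smul
    rw [← Submodule.Quotient.mk_smul, Submodule.Quotient.mk_eq_zero, smul_eq_mul, huv]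
    exact Submodule.smul_mem_pointwise_smul v r ⊤ trivial
  rw [Submodule.Quotient.mk_eq_zero, Submodule.mem_smul_pointwise_iff_exists] at hu_zero
  obtain ⟨w, -, rfl⟩ := hu_zero
  exact ⟨w, hr_reg (by simp only [smul_eq_mul] at hu ⊢; linear_combination hu)⟩

lemma mk'_mem_bot_iff {R K : Type*} [CommRing R] [CommRing K] [Algebra R K] [IsFractionRing R K]
    (b : R) (c : R⁰) :
    IsLocalization.mk' K b c ∈ (⊥ : Subalgebra R K) ↔ (c : R) ∣ b := by
  rw [Algebra.mem_bot]
  refine exists_congr fun a => ?_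
  rw [IsLocalization.eq_mk'_iff_mul_eq, ← map_mul, (IsFractionRing.injective R K).eq_iff, mul_comm,
    eq_comm]

variable {A : Type*} [CommRing A]

lemma SerreS2.height_le_one_of_eq_colon (hS2 : SerreS2 A) {P : Ideal A} [hP : P.IsPrime] {b c : A}
    (hc : c ∈ A⁰) (hPbc : P = (Ideal.span {c}).colon {b}) : P.height ≤ 1 := by
  by_contra! hheight
  have hdim : ((2 : ℕ) : WithBot ℕ∞) ≤ ringKrullDim (Localization.AtPrime P) := by
    rw [IsLocalization.AtPrime.ringKrullDim_eq_height P (Localization.AtPrime P)]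
    exact WithBot.coe_le_coe.2 (by simpa [one_add_one_eq_two] using Order.add_one_le_of_lt hheight)
  obtain ⟨rs, hlength, hmem, hreg⟩ := hS2 ⟨P, hP⟩ 2 le_rfl hdim
  obtain ⟨r, s, rfl⟩ := List.length_eq_two.1 hlength
  let φ := algebraMap A (Localization.AtPrime P)
  have hφc : φ c ∈ (Localization.AtPrime P)⁰ :=
    IsLocalization.map_nonZeroDivisors_le P.primeCompl _ ⟨c, hc, rfl⟩
  have hdvd : ∀ t ∈ IsLocalRing.maximalIdeal (Localization.AtPrime P), φ c ∣ t * φ b := by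
    intro t ht
    have hle : P.map φ ≤ (Ideal.span {φ c}).colon {φ b} := by
      refine Ideal.map_le_iff_le_comap.2 fun a ha => ?_
      rw [hPbc, Submodule.mem_colon_singleton, Ideal.mem_span_singleton] at ha
      rw [Ideal.mem_comap, Submodule.mem_colon_singleton, Ideal.mem_span_singleton]
      simpa only [smul_eq_mul, map_mul] using map_dvd φ ha
    rw [← IsLocalization.AtPrime.map_eq_maximalIdeal P] at ht
    exact Ideal.mem_span_singleton.1 (Submodule.mem_colon_singleton.1 (hle ht))
  have hφ : φ c ∣ φ b := dvd_of_isWeaklyRegular_pair hreg.toIsWeaklyRegular hφc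
    (hdvd r (hmem r (by simp))) (hdvd s (hmem s (by simp)))
  rw [← Ideal.mem_span_singleton, ← Set.image_singleton, ← Ideal.map_span,
    IsLocalization.algebraMap_mem_map_algebraMap_iff P.primeCompl] at hφ
  obtain ⟨t, htP, ht⟩ := hφ
  exact htP (hPbc ▸ Submodule.mem_colon_singleton.2 ht)

lemma SerreS2.isDeterminedOn_bot [IsNoetherianRing A] (hS2 : SerreS2 A) :
    IsDeterminedOn {p : PrimeSpectrum A | p.asIdeal.height ≤ 1}
      (Subalgebra.toSubmodule (⊥ : Subalgebra A (FractionRing A))) := by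
  intro x hx
  obtain ⟨b, c, rfl⟩ := IsLocalization.exists_mk'_eq A⁰ x
  by_contra hbc
  rw [Subalgebra.mem_toSubmodule, mk'_mem_bot_iff, ← Ideal.mem_span_singleton] at hbc
  have hne : (Ideal.span {(c : A)}).colon {b} ≠ ⊤ := by
    rwa [Ideal.ne_top_iff_one, Submodule.mem_colon_singleton, one_smul]
  obtain ⟨P, hPmin⟩ := Ideal.nonempty_minimalPrimes hne
  have hP : P.IsPrime := hPmin.1.1
  obtain ⟨b', hb'⟩ := Submodule.exists_eq_colon_of_mem_minimalPrimes hPmin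
  obtain ⟨s, hsP, hs⟩ := hx ⟨P, hP⟩ (hS2.height_le_one_of_eq_colon c.2 hb')
  rw [Subalgebra.mem_toSubmodule, IsLocalization.smul_mk', mk'_mem_bot_iff,
    ← Ideal.mem_span_singleton] at hs
  exact hsP (hPmin.1.2 (Submodule.mem_colon_singleton.2 hs))

end SerreCondition

section Primes

variable {A : Type*} [CommRing A] {J J' P : Ideal A}

lemma le_saturation_radical_of_mem_minimalPrimes [P.IsPrime] (hP : P ∈ J.minimalPrimes) :
    P ≤ saturation P.primeCompl J.radical := by
  intro x hx
  have hmem : algebraMap A (Localization.AtPrime P) x ∈ J.radical.map (algebraMap A _) := by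
    rw [IsLocalization.map_radical P.primeCompl,
      IsLocalization.AtPrime.radical_map_of_mem_minimalPrimes _ P J hP]
    exact Ideal.mem_map_of_mem _ hx
  exact (IsLocalization.algebraMap_mem_map_algebraMap_iff P.primeCompl _ _ _).1 hmem

lemma mem_minimalPrimes_of_height_le_one [P.IsPrime] (hJ : ∃ g ∈ J, g ∈ A⁰) (hJP : J ≤ P)
    (hP : P.height ≤ 1) : P ∈ J.minimalPrimes := by
  obtain ⟨g, hgJ, hg⟩ := hJ
  have hJ_height : 1 ≤ J.height :=
    (Ideal.one_le_height_span_singleton_of_mem_nonZeroDivisors hg).trans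
      (Ideal.height_mono ((Ideal.span_singleton_le_iff_mem _).2 hgJ))
  have : P.FiniteHeight := ⟨Or.inr (ne_top_of_le_ne_top (by simp) hP)⟩
  exact Ideal.mem_minimalPrimes_of_height_le hJP (hP.trans hJ_height)

lemma le_saturation_radical_of_height_le_one [P.IsPrime] (hJ : ∃ g ∈ J, g ∈ A⁰) (hJP : J ≤ P)
    (hP : P.height ≤ 1) : P ≤ saturation P.primeCompl J.radical :=
  le_saturation_radical_of_mem_minimalPrimes (mem_minimalPrimes_of_height_le_one hJ hJP hP)

lemma le_of_associatedPrimes_quotient_subset [IsNoetherianRing A] (hJ' : J'.IsRadical)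
    (hass : associatedPrimes A (A ⧸ J') ⊆ associatedPrimes A (A ⧸ J)) : J ≤ J' := by
  rw [← hJ'.radical, ← Ideal.sInf_minimalPrimes]
  refine le_sInf fun P hP => ?_
  have hP_ass : P ∈ associatedPrimes A (A ⧸ J') := by
    apply Module.associatedPrimes.minimalPrimes_annihilator_subset_associatedPrimes
    rwa [Ideal.annihilator_quotient]
  simpa only [Submodule.annihilator_top, Ideal.annihilator_quotient] using
    IsAssociatedPrime.annihilator_le (hass hP_ass)

end Primes

section Comparison

variable {A : Type*} [CommRing A] [IsNoetherianRing A] {J J' : Ideal A} {n : ℕ}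

lemma chainRing_succ_le_saturation_of_le (hJ : ∃ g ∈ J, g ∈ A⁰) (hJJ' : J ≤ J')
    (hn : chainRing A J n = chainRing A J (n + 1)) {P : Ideal A} [P.IsPrime] (hP : P.height ≤ 1) :
    Subalgebra.toSubmodule (chainRing A J' (n + 1)) ≤
      saturation P.primeCompl (Subalgebra.toSubmodule (chainRing A J' n)) := by
  by_cases hJ'P : J' ≤ P
  · have hJ' : ∃ g ∈ J', g ∈ A⁰ := hJ.imp fun g hg => ⟨hJJ' hg.1, hg.2⟩
    have hJP := hJJ'.trans hJ'P
    have hJJ'_sat := hJP.trans (le_saturation_radical_of_height_le_one hJ' hJ'P hP)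
    have hJ'J_sat := hJ'P.trans (le_saturation_radical_of_height_le_one hJ hJP hP)
    calc Subalgebra.toSubmodule (chainRing A J' (n + 1))
        ≤ saturation P.primeCompl (Subalgebra.toSubmodule (chainRing A J (n + 1))) :=
          chainRing_le_saturation hJ' hJ hJ'J_sat hJJ'_sat _
      _ = saturation P.primeCompl (Subalgebra.toSubmodule (chainRing A J n)) := by rw [← hn]
      _ ≤ saturation P.primeCompl (Subalgebra.toSubmodule (chainRing A J' n)) :=
          saturation_le_saturation (chainRing_le_saturation hJ hJ' hJJ'_sat hJ'J_sat _)
  · obtain ⟨a, haJ', haP⟩ := SetLike.not_le_iff_exists.1 hJ'P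
    exact fun x hx => ⟨a, haP, smul_mem_chainRing haJ' hx⟩

lemma chainRing_eq_succ_of_le (hS2 : SerreS2 A) (hJ : ∃ g ∈ J, g ∈ A⁰) (hJJ' : J ≤ J')
    (hn : chainRing A J n = chainRing A J (n + 1)) :
    chainRing A J' n = chainRing A J' (n + 1) := by
  have hJ' : ∃ g ∈ J', g ∈ A⁰ := hJ.imp fun g hg => ⟨hJJ' hg.1, hg.2⟩
  refine le_antisymm (chainRing_mono J' n.le_succ) fun x hx => ?_
  exact isDeterminedOn_chainRing hS2.isDeterminedOn_bot hJ' n x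
    fun p hp => chainRing_succ_le_saturation_of_le hJ hJJ' hn hp hx

end Comparison

theorem nSteps_mono_of_associatedPrimes_subset_general
    {A : Type*} [CommRing A] [IsNoetherianRing A] (hS2 : SerreS2 A) {J J' : Ideal A}
    (hJ : ∃ g ∈ J, g ∈ A⁰) (hstab : ∃ n, chainRing A J n = chainRing A J (n + 1))
    (hJJ' : J ≤ J') : nSteps A J' ≤ nSteps A J :=
  Nat.sInf_le (chainRing_eq_succ_of_le hS2 hJ hJJ' (Nat.sInf_mem hstab))

/-- Let `A` be a reduced Noetherian equidimensional ring satisfying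
`(S₂)` with finite normalization, `J` a test ideal for `A`, and `J′ ⊆ A` a radical
ideal all of whose associated primes (of `A/J′`) are associated primes of `A/J`.
Then `n(A, J′) ≤ n(A, J)`. -/
theorem nSteps_mono_of_associatedPrimes_subset
    (A : Type*) [CommRing A] [IsReduced A] [IsNoetherianRing A]
    [Module.Finite A (integralClosure A (FractionRing A))]
    (hequi : Equidimensional A) (hS2 : SerreS2 A)
    (J : Ideal A) (hJ : IsTestIdeal A J)
    (J' : Ideal A) (hrad' : J'.IsRadical)
    (hass : associatedPrimes A (A ⧸ J') ⊆ associatedPrimes A (A ⧸ J)) :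
    nSteps A J' ≤ nSteps A J :=
  nSteps_mono_of_associatedPrimes_subset_general hS2 hJ.1 (exists_chainRing_eq_chainRing_succ hJ.1)
    (le_of_associatedPrimes_quotient_subset hrad' hass)
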